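/- arXiv:2006.12547 — 2 statements merged into one kernel-verified Lean document; each statement's English description precedes it below -/
import Mathlib

section
/- If a positive integer n satisfies d·τ(n²) < n² for every proper divisor d of n² (i.e., every d with d | n² and d ≠ n²), then M(n) ≠ 0. -/
/-!
Comparing areas, a tiling of the `n × n` square by `k ≥ 2` rectangles of area `d` gives
`k * d = n ^ 2`, so `d` is a proper divisor of `n ^ 2`. Since the area is fixed, the width of a
tile determines its height, so pairwise incongruent tiles have distinct widths; these all divide
`d`, hence `n ^ 2`. Thus `k ≤ τ(n ^ 2)` and `n ^ 2 = k * d ≤ d * τ(n ^ 2)`, contradicting the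
hypothesis on `d`.
-/

/-- An axis-parallel rectangle with positive integer side lengths,
placed at real coordinates `(x, y)` with width `w` and height `h`. -/
structure Rect where
  x : ℝ
  y : ℝ
  w : ℕ
  h : ℕ
  w_pos : 0 < w
  h_pos : 0 < h

namespace Rect

/-- The (closed) set of points covered by a rectangle. -/
def toSet (r : Rect) : Set (ℝ × ℝ) :=
  Set.Icc r.x (r.x + r.w) ×ˢ Set.Icc r.y (r.y + r.h)

/-- The (open) interior of a rectangle. -/
def interiorSet (r : Rect) : Set (ℝ × ℝ) :=
  Set.Ioo r.x (r.x + r.w) ×ˢ Set.Ioo r.y (r.y + r.h)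

/-- Two rectangles are congruent iff they have the same unordered pair
of side lengths. -/
def Congruent (r s : Rect) : Prop :=
  (r.w = s.w ∧ r.h = s.h) ∨ (r.w = s.h ∧ r.h = s.w)

end Rect

noncomputable instance : DecidableEq Rect := Classical.decEq _

/-- `S` is a finite collection of axis-parallel rectangles with positive
integer side lengths, with pairwise disjoint interiors, whose union is
the `n × n` square. -/
def IsRectTiling (n : ℕ) (S : Finset Rect) : Prop :=
  (⋃ r ∈ S, r.toSet) = Set.Icc (0 : ℝ) (n : ℝ) ×ˢ Set.Icc (0 : ℝ) (n : ℝ) ∧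
  ∀ r ∈ S, ∀ s ∈ S, r ≠ s → r.interiorSet ∩ s.interiorSet = ∅

/-- A Mondrian tiling: a rectangle tiling of the `n × n` square in which
no two rectangles are congruent. -/
def IsMondrianTiling (n : ℕ) (S : Finset Rect) : Prop :=
  IsRectTiling n S ∧ ∀ r ∈ S, ∀ s ∈ S, r ≠ s → ¬ r.Congruent s

/-- `M(n) = 0`: there is a nontrivial Mondrian tiling of the `n × n` square
in which all rectangles have the same area. -/
def MondrianZero (n : ℕ) : Prop :=
  ∃ S : Finset Rect, IsMondrianTiling n S ∧ 2 ≤ S.card ∧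
    ∃ d : ℕ, ∀ r ∈ S, r.w * r.h = d

open MeasureTheory

/-- A closed rectangle differs from its interior by a Lebesgue-null set. -/
lemma Rect.interiorSet_ae_eq (r : Rect) : r.interiorSet =ᵐ[volume] r.toSet :=
  Measure.set_prod_ae_eq Ioo_ae_eq_Icc Ioo_ae_eq_Icc

lemma Rect.measurableSet_toSet (r : Rect) : MeasurableSet r.toSet :=
  measurableSet_Icc.prod measurableSet_Icc

lemma Rect.volume_toSet (r : Rect) : volume r.toSet = ((r.w * r.h : ℕ) : ENNReal) := by
  rw [Rect.toSet, Measure.volume_eq_prod, Measure.prod_prod]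
  simp

lemma IsRectTiling.sum_area {n : ℕ} {S : Finset Rect} (hS : IsRectTiling n S) :
    ∑ r ∈ S, r.w * r.h = n ^ 2 := by
  have hdisj : (S : Set Rect).Pairwise (Function.onFun (AEDisjoint volume) Rect.toSet) := by
    intro r hr s hs hrs
    have hd : Disjoint r.interiorSet s.interiorSet :=
      Set.disjoint_iff_inter_eq_empty.mpr (hS.2 r hr s hs hrs)
    exact hd.aedisjoint.congr r.interiorSet_ae_eq.symm s.interiorSet_ae_eq.symm
  have hvol := measure_biUnion_finset₀ hdisj fun r _ => r.measurableSet_toSet.nullMeasurableSet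
  rw [hS.1, Measure.volume_eq_prod, Measure.prod_prod, ← Measure.volume_eq_prod] at hvol
  simp only [Real.volume_Icc, sub_zero, ENNReal.ofReal_natCast, Rect.volume_toSet] at hvol
  rw [sq]
  exact_mod_cast hvol.symm

/-- If `d·τ(n²) < n²` for every proper divisor `d` of `n²`, then `M(n) ≠ 0`. -/
theorem stmt5 (n : ℕ) (hn : 0 < n)
    (h : ∀ d : ℕ, d ∣ n ^ 2 → d ≠ n ^ 2 →
      d * (Nat.divisors (n ^ 2)).card < n ^ 2) :
    ¬ MondrianZero n := by
  rintro ⟨S, ⟨hT, hC⟩, hcard, d, hd⟩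
  have harea : S.card * d = n ^ 2 := by
    rw [← hT.sum_area, Finset.sum_congr rfl hd, Finset.sum_const, smul_eq_mul]
  have hpos : 0 < n ^ 2 := by positivity
  have hdvd : d ∣ n ^ 2 := Dvd.intro_left _ harea
  have hne : d ≠ n ^ 2 := by
    intro he
    rw [← he] at harea hpos
    nlinarith
  have hle : S.card ≤ (Nat.divisors (n ^ 2)).card := by
    refine Finset.card_le_card_of_injOn Rect.w ?_ ?_
    · intro r hr
      simpa [hn.ne'] using (Dvd.intro _ (hd r hr)).trans hdvd
    · intro r hr s hs hw
      by_contra hrs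
      refine hC r hr s hs hrs (Or.inl ⟨hw, ?_⟩)
      have hrd := hd r hr
      rw [← hd s hs, hw] at hrd
      exact Nat.eq_of_mul_eq_mul_left s.w_pos hrd
  have := h d hdvd hne
  nlinarith
end

section
/- If a positive integer n satisfies d·τ(n)² < n² for every proper divisor d of n² (i.e., every d with d | n² and d ≠ n²), then M(n) ≠ 0. -/
open MeasureTheory

lemma Rect.volume_interiorSet (r : Rect) :
    volume r.interiorSet = ((r.w * r.h : ℕ) : ENNReal) := by
  rw [Rect.interiorSet, Measure.volume_eq_prod, Measure.prod_prod, Real.volume_Ioo,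
    Real.volume_Ioo]
  simp

lemma Rect.interiorSet_subset (r : Rect) : r.interiorSet ⊆ r.toSet :=
  Set.prod_mono Set.Ioo_subset_Icc_self Set.Ioo_subset_Icc_self

open scoped Pointwise in
lemma card_divisors_sq_le (n : ℕ) :
    (Nat.divisors (n ^ 2)).card ≤ (Nat.divisors n).card ^ 2 := by
  rw [sq, sq, Nat.divisors_mul]
  exact Finset.card_mul_le

/-- If `d·τ(n)² < n²` for every proper divisor `d` of `n²`, then `M(n) ≠ 0`. -/
theorem stmt6 (n : ℕ) (hn : 0 < n)
    (h : ∀ d : ℕ, d ∣ n ^ 2 → d ≠ n ^ 2 →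
      d * (Nat.divisors n).card ^ 2 < n ^ 2) :
    ¬ MondrianZero n := by
  rintro ⟨S, ⟨hT, hC⟩, hcard, d, hd⟩
  have hn2 : 0 < n ^ 2 := by positivity
  have harea : S.card * d = n ^ 2 := by
    rw [← hT.sum_area, Finset.sum_congr rfl hd, Finset.sum_const, smul_eq_mul]
  have hdvd : d ∣ n ^ 2 := Dvd.intro_left _ harea
  have hd0 : 0 < d := Nat.pos_of_dvd_of_pos hdvd hn2
  have hne : d ≠ n ^ 2 := by
    intro he
    rw [← he] at harea
    nlinarith
  have hwidth : S.card ≤ (Nat.divisors d).card := by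
    refine Finset.card_le_card_of_injOn Rect.w ?_ ?_
    · intro r hr
      exact Nat.mem_divisors.2 ⟨Dvd.intro _ (hd r hr), hd0.ne'⟩
    · intro r hr s hs hrs
      by_contra hne'
      refine hC r hr s hs hne' (Or.inl ⟨hrs, ?_⟩)
      have he := (hd r hr).trans (hd s hs).symm
      rw [show r.w = s.w from hrs] at he
      exact Nat.eq_of_mul_eq_mul_left s.w_pos he
  have hk : S.card ≤ (Nat.divisors n).card ^ 2 :=
    hwidth.trans ((Finset.card_le_card (Nat.divisors_subset_of_dvd hn2.ne' hdvd)).trans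
      (card_divisors_sq_le n))
  have hlt := h d hdvd hne
  rw [← harea, mul_comm S.card d] at hlt
  exact absurd (Nat.mul_le_mul_left d hk) (not_le.2 hlt)
end
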